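/- arXiv:2410.22507 — 2 statements merged into one kernel-verified Lean document; each statement's English description precedes it below -/
import Mathlib

section
/- Let K be a totally real number field satisfying: (a) every α ∈ O_K⁺ with α ⪯ 2 lies in ℤ, and (b) if 2 = αω² with α, ω ∈ O_K then εω ∈ ℤ for some unit ε. Then the zero lattice has truant 1 and, assuming 2 is squarefree in O_K, 1 belongs to every universality criterion set and 2 belongs to the minimal criterion set if and only if 2 is squarefree in O_K. -/
open NumberField

def TotReal (K : Type) [Field K] [NumberField K] : Prop :=
  ∀ v : InfinitePlace K, v.IsReal

def TPos {K : Type} [Field K] [NumberField K] (a : 𝓞 K) : Prop :=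
  ∀ φ : K →+* ℝ, 0 < φ (a : K)

noncomputable def Nm {K : Type} [Field K] [NumberField K] (a : 𝓞 K) : ℤ :=
  Algebra.norm ℤ a

structure QLat (K : Type) [Field K] [NumberField K] where
  carrier : Type
  [isAddCommGroup : AddCommGroup carrier]
  [isModule : Module (𝓞 K) carrier]
  [isFinite : Module.Finite (𝓞 K) carrier]
  [isTorsionFree : NoZeroSMulDivisors (𝓞 K) carrier]
  Q : QuadraticForm (𝓞 K) carrier

attribute [instance] QLat.isAddCommGroup QLat.isModule QLat.isFinite QLat.isTorsionFree

def QLat.PosDef {K : Type} [Field K] [NumberField K] (L : QLat K) : Prop :=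
  ∀ v : L.carrier, v ≠ 0 → TPos (L.Q v)

def QLat.Rep {K : Type} [Field K] [NumberField K] (L : QLat K) (a : 𝓞 K) : Prop :=
  ∃ v : L.carrier, L.Q v = a

/-- Total order relation $a ⪯ b$: $a ≺ b$ (in all real embeddings) or $a = b$. -/
def TLE {K : Type} [Field K] [NumberField K] (a b : 𝓞 K) : Prop :=
  (∀ φ : K →+* ℝ, φ (a : K) < φ (b : K)) ∨ a = b

/-- $α$ is critical: some totally positive definite lattice represents every class of
$\mathcal O_K^+/\mathcal U_K^2$ except that of $α$. -/
def Crit {K : Type} [Field K] [NumberField K] (α : 𝓞 K) : Prop :=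
  TPos α ∧ ∃ L : QLat K, L.PosDef ∧
    (∀ γ : 𝓞 K, TPos γ → (¬ ∃ ε : (𝓞 K)ˣ, γ = α * (ε : 𝓞 K) ^ 2) → L.Rep γ) ∧
    ¬ L.Rep α

/-- A universality criterion set: a set of totally positive integers such that a totally
positive definite lattice is universal iff it represents all its elements. -/
def IsCritSet {K : Type} [Field K] [NumberField K] (C : Set (𝓞 K)) : Prop :=
  (∀ c ∈ C, TPos c) ∧
  ∀ L : QLat K, L.PosDef → ((∀ c ∈ C, L.Rep c) ↔ ∀ γ : 𝓞 K, TPos γ → L.Rep γ)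


lemma exists_real_of_complex {K : Type} [Field K] [NumberField K] (hK : TotReal K)
    (σ : K →+* ℂ) : ∃ φ : K →+* ℝ, ∀ x, σ x = (φ x : ℂ) := by
  have h := InfinitePlace.isReal_of_mk_isReal (hK (InfinitePlace.mk σ))
  exact ⟨h.embedding, fun x => (ComplexEmbedding.IsReal.coe_embedding_apply h x).symm⟩

lemma exists_real_of_place {K : Type} [Field K] [NumberField K] (hK : TotReal K)
    (w : InfinitePlace K) : ∃ φ : K →+* ℝ, ∀ x, w x = |φ x| :=
  ⟨InfinitePlace.embedding_of_isReal (hK w), fun x =>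
    ((InfinitePlace.norm_embedding_of_isReal (hK w) x).symm)⟩

lemma exists_place_of_real {K : Type} [Field K] [NumberField K]
    (φ : K →+* ℝ) : ∃ w : InfinitePlace K, ∀ x, w x = |φ x| := by
  refine ⟨InfinitePlace.mk (Complex.ofRealHom.comp φ), fun x => ?_⟩
  simp [InfinitePlace.apply]

lemma exists_real {K : Type} [Field K] [NumberField K] (hK : TotReal K) :
    Nonempty (K →+* ℝ) := by
  obtain ⟨w⟩ := (inferInstance : Nonempty (InfinitePlace K))
  exact ⟨(exists_real_of_place hK w).choose⟩

lemma nm_pos {K : Type} [Field K] [NumberField K] (hK : TotReal K) (γ : 𝓞 K) (h : TPos γ) :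
    0 < Nm γ := by
  have h1 := Algebra.norm_eq_prod_embeddings ℚ ℂ (γ : K)
  have h2 : ∃ r : ℝ, 0 < r ∧ ∏ σ : K →ₐ[ℚ] ℂ, σ (γ : K) = (r : ℂ) := by
    choose f hf using fun σ : K →ₐ[ℚ] ℂ => exists_real_of_complex hK σ.toRingHom
    refine ⟨∏ σ, f σ (γ : K), Finset.prod_pos fun σ _ => h _, ?_⟩
    rw [Complex.ofReal_prod]
    exact Finset.prod_congr rfl fun σ _ => hf σ _
  obtain ⟨r, hr, h3⟩ := h2
  rw [h3, ← Algebra.coe_norm_int] at h1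
  have h4 : ((Algebra.norm ℤ γ : ℤ) : ℝ) = r := by
    have : (((Algebra.norm ℤ γ : ℤ) : ℝ) : ℂ) = r := by rw [← h1]; simp
    exact_mod_cast this
  have h5 : (0 : ℝ) < ((Algebra.norm ℤ γ : ℤ) : ℝ) := by rw [h4]; exact hr
  exact_mod_cast h5

lemma finite_bdd {K : Type} [Field K] [NumberField K] (hK : TotReal K) (B : ℝ) :
    {x : 𝓞 K | TPos x ∧ ∀ φ : K →+* ℝ, φ (x : K) ≤ B}.Finite := by
  have h := Embeddings.finite_of_norm_le K ℂ B
  refine Set.Finite.subset (h.preimage (f := fun x : 𝓞 K => (x : K))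
    (RingOfIntegers.coe_injective.injOn)) ?_
  rintro x ⟨hx, hB⟩
  refine ⟨RingOfIntegers.isIntegral_coe x, fun σ => ?_⟩
  obtain ⟨φ, hφ⟩ := exists_real_of_complex hK σ
  rw [hφ, Complex.norm_real, Real.norm_eq_abs, abs_of_pos (hx φ)]
  exact hB φ

open NumberField.Units NumberField.Units.dirichletUnitTheorem in
lemma log_approx (K : Type) [Field K] [NumberField K] :
    ∃ C : ℝ, 0 ≤ C ∧ ∀ v : {w : InfinitePlace K // w ≠ w₀} → ℝ, ∃ u : (𝓞 K)ˣ,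
      ∀ w, |v w + logEmbedding K (Additive.ofMul u) w| ≤ C := by
  classical
  let b := (basisUnitLattice K).ofZLatticeBasis ℝ (unitLattice K)
  refine ⟨∑ i, ‖b i‖, Finset.sum_nonneg fun _ _ => norm_nonneg _, fun v => ?_⟩
  have h1 := ZSpan.norm_fract_le (K := ℝ) b v
  have h2 := (ZSpan.floor b v).2
  have h3 : Submodule.span ℤ (Set.range b) = unitLattice K :=
    Module.Basis.ofZLatticeBasis_span ℝ (unitLattice K) (basisUnitLattice K)
  have h4 : ((ZSpan.floor b v : Submodule.span ℤ (Set.range b)) : logSpace K) ∈ unitLattice K :=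
    h3.le h2
  obtain ⟨u, -, hu⟩ := h4
  refine ⟨(Additive.toMul u)⁻¹, fun w => ?_⟩
  have h3 := (norm_le_pi_norm (ZSpan.fract b v) w).trans h1
  rw [ZSpan.fract_apply, ← hu] at h3
  rw [Real.norm_eq_abs] at h3
  have e : v w + logEmbedding K (Additive.ofMul (Additive.toMul u)⁻¹) w =
      (v - (logEmbedding K).toIntLinearMap u) w := by
    rw [ofMul_inv, map_neg]
    simp [sub_eq_add_neg]
  rw [e]
  exact h3

open NumberField.Units NumberField.Units.dirichletUnitTheorem in
lemma balance {K : Type} [Field K] [NumberField K] (hK : TotReal K) :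
    ∃ c : ℝ, 1 ≤ c ∧ ∀ γ : 𝓞 K, TPos γ → ∃ u : (𝓞 K)ˣ,
      ∀ φ ψ : K →+* ℝ, φ ((u ^ 2 * γ : 𝓞 K) : K) ≤ c * ψ ((u ^ 2 * γ : 𝓞 K) : K) := by
  classical
  obtain ⟨C, hC, hCu⟩ := log_approx K
  set n : ℝ := (Fintype.card (InfinitePlace K) : ℝ) with hn
  have hn1 : 1 ≤ n := by
    rw [hn]; exact_mod_cast Fintype.card_pos
  set C' := n * C with hC'
  have hCC : C ≤ C' := by nlinarith
  refine ⟨Real.exp (4 * C'), Real.one_le_exp (by nlinarith), fun γ hγ => ?_⟩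
  have hmult : ∀ w : InfinitePlace K, (w.mult : ℝ) = 1 := fun w => by
    rw [InfinitePlace.mult_isReal ⟨w, hK w⟩]; simp
  set m : ℝ := (∑ w : InfinitePlace K, Real.log (w (γ : K))) / n with hm
  set v : InfinitePlace K → ℝ := fun w => (Real.log (w (γ : K)) - m) / 2 with hv
  obtain ⟨u, hu⟩ := hCu (fun w => v w.1)
  set d : InfinitePlace K → ℝ := fun w => v w + Real.log (w ((u : 𝓞 K) : K)) with hd
  have hd1 : ∀ w, w ≠ w₀ → |d w| ≤ C := by
    intro w hw
    have := hu ⟨w, hw⟩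
    rw [logEmbedding_component, hmult, one_mul] at this
    exact this
  have hsum : ∑ w, d w = 0 := by
    have h1 : ∑ w : InfinitePlace K, Real.log (w ((u : 𝓞 K) : K)) = 0 := by
      have := sum_mult_mul_log u
      simpa [hmult] using this
    have h2 : ∑ w, v w = 0 := by
      simp only [hv]
      rw [← Finset.sum_div, Finset.sum_sub_distrib, Finset.sum_const, Finset.card_univ,
        nsmul_eq_mul, ← hn, hm]
      field_simp
      ring
    simp only [hd]
    rw [Finset.sum_add_distrib, h1, h2, add_zero]
  have hd2 : ∀ w, |d w| ≤ C' := by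
    intro w
    by_cases hw : w = w₀
    · subst hw
      rw [← Finset.add_sum_erase _ _ (Finset.mem_univ w₀)] at hsum
      have h1 : d w₀ = - ∑ x ∈ Finset.univ.erase w₀, d x := by linarith
      rw [h1, abs_neg]
      refine (Finset.abs_sum_le_sum_abs _ _).trans ?_
      refine (Finset.sum_le_sum fun x hx => hd1 x (Finset.ne_of_mem_erase hx)).trans ?_
      rw [Finset.sum_const, nsmul_eq_mul, hC', hn]
      refine mul_le_mul_of_nonneg_right ?_ hC
      exact_mod_cast Finset.card_le_univ _
    · exact (hd1 w hw).trans hCC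
  refine ⟨u, fun φ ψ => ?_⟩
  have key : ∀ φ : K →+* ℝ, ∃ x : ℝ, |x| ≤ C' ∧
      φ ((u ^ 2 * γ : 𝓞 K) : K) = Real.exp (2 * x + m) := by
    intro φ
    obtain ⟨w, hw⟩ := exists_place_of_real φ
    refine ⟨d w, hd2 w, ?_⟩
    have hu0 : φ ((u : 𝓞 K) : K) ≠ 0 := by simp
    have h0 := hγ φ
    have e1 : 2 * d w + m = Real.log (w (γ : K)) + 2 * Real.log (w ((u : 𝓞 K) : K)) := by
      simp only [hd, hv]; ring
    rw [e1, hw, hw, Real.exp_add, Real.log_abs, Real.log_abs, Real.exp_log h0, two_mul,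
      Real.exp_add, ← Real.log_abs, Real.exp_log (abs_pos.mpr hu0), abs_mul_abs_self]
    simp only [map_mul, map_pow]
    ring
  obtain ⟨x, hx, ex⟩ := key φ
  obtain ⟨y, hy, ey⟩ := key ψ
  rw [ex, ey, ← Real.exp_add]
  apply Real.exp_le_exp.mpr
  rw [abs_le] at hx hy
  linarith

lemma sum_ite_split (m : ℕ) (hm : 0 < m) (t : ℤ) :
    ∑ j : Fin m, (t / m + if ((j : ℕ) : ℤ) < t % m then 1 else 0) = t := by
  have hm' : (0 : ℤ) < m := by exact_mod_cast hm
  have h0 := Int.emod_nonneg t hm'.ne'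
  have h1 := Int.emod_lt_of_pos t hm'
  obtain ⟨r, hr⟩ := Int.eq_ofNat_of_zero_le h0
  have hrm : r < m := by omega
  rw [hr]
  rw [Finset.sum_add_distrib, Finset.sum_const, Finset.card_univ, Fintype.card_fin]
  have : ∑ j : Fin m, (if ((j : ℕ) : ℤ) < (r : ℤ) then (1 : ℤ) else 0) = r := by
    rw [Fin.sum_univ_eq_sum_range (fun j => if ((j : ℕ) : ℤ) < (r : ℤ) then (1 : ℤ) else 0) m]
    rw [← Finset.sum_filter]
    simp only [Nat.cast_lt]
    have : (Finset.range m).filter (fun j => j < r) = Finset.range r := by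
      ext j; simp; omega
    rw [this]; simp
  rw [this, ← hr, nsmul_eq_mul]
  exact Int.mul_ediv_add_emod t m

lemma split {K : Type} [Field K] [NumberField K] (hK : TotReal K) :
    ∃ B : ℝ, ∀ γ : 𝓞 K, TPos γ → ∃ u : (𝓞 K)ˣ,
      (∀ φ : K →+* ℝ, φ ((u ^ 2 * γ : 𝓞 K) : K) ≤ B) ∨
      ∃ m : ℕ, ∃ f : Fin m → 𝓞 K, (u ^ 2 * γ : 𝓞 K) = ∑ j, f j ∧
        ∀ j, ∀ φ : K →+* ℝ, 2 < φ (f j : K) ∧ φ (f j : K) ≤ B := by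
  classical
  obtain ⟨c, hc, hbal⟩ := balance hK
  obtain ⟨φ₀⟩ := exists_real hK
  let b := RingOfIntegers.basis K
  set D : ℝ := ∑ φ : K →+* ℝ, ∑ i, |φ (b i : K)| with hD
  have hDφ : ∀ φ : K →+* ℝ, ∑ i, |φ (b i : K)| ≤ D := fun φ =>
    Finset.single_le_sum (f := fun φ : K →+* ℝ => ∑ i, |φ (b i : K)|)
      (fun _ _ => Finset.sum_nonneg fun _ _ => abs_nonneg _) (Finset.mem_univ φ)
  have hD0 : 0 ≤ D := (Finset.sum_nonneg fun _ _ => abs_nonneg _).trans (hDφ φ₀)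
  set R : ℝ := c * (D + 3) with hR
  have hR0 : 0 < R := by positivity
  refine ⟨2 * (c * R) + D, fun γ hγ => ?_⟩
  obtain ⟨u, hu⟩ := hbal γ hγ
  refine ⟨u, ?_⟩
  set g : 𝓞 K := u ^ 2 * γ with hg
  set M := φ₀ (g : K) with hM
  rcases lt_or_ge M R with hlt | hge
  · left
    intro φ
    have := hu φ φ₀
    have h2 : c * M ≤ c * R := by gcongr
    have h3 : 0 < c * R := by positivity
    linarith
  · right
    have hq : 1 ≤ M / R := (one_le_div hR0).mpr hge
    set m := ⌊M / R⌋₊ with hm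
    have hm1 : 1 ≤ m := (Nat.one_le_floor_iff _).mpr hq
    have hm1' : (1 : ℝ) ≤ m := by exact_mod_cast hm1
    have hm0 : (0 : ℝ) < m := by linarith
    have hlo : (m : ℝ) * R ≤ M := by
      have := Nat.floor_le (show 0 ≤ M / R by linarith)
      exact (le_div_iff₀ hR0).mp this
    have hhi : M ≤ 2 * R * m := by
      have := Nat.lt_floor_add_one (M / R)
      rw [← hm, div_lt_iff₀ hR0] at this
      nlinarith
    let t : _ → ℤ := fun i => b.repr g i
    let k : Fin m → _ → ℤ := fun j i => t i / m + if ((j : ℕ) : ℤ) < t i % m then 1 else 0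
    have hgsum : g = ∑ i, t i • b i := (b.sum_repr g).symm
    refine ⟨m, fun j => ∑ i, k j i • b i, ?_, ?_⟩
    · rw [Finset.sum_comm]
      conv_lhs => rw [hgsum]
      refine Finset.sum_congr rfl fun i _ => ?_
      rw [← Finset.sum_smul, sum_ite_split m hm1]
    · intro j φ
      have hbound : ∀ i, |(k j i : ℝ) - t i / m| ≤ 1 := by
        intro i
        have hmZ : (0 : ℤ) < m := by exact_mod_cast hm1
        have e := Int.mul_ediv_add_emod (t i) m
        have e0 := Int.emod_nonneg (t i) hmZ.ne'
        have e1 := Int.emod_lt_of_pos (t i) hmZ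
        have eR : (m : ℝ) * ((t i / m : ℤ) : ℝ) + ((t i % m : ℤ) : ℝ) = t i := by exact_mod_cast e
        have e0R : (0 : ℝ) ≤ ((t i % m : ℤ) : ℝ) := by exact_mod_cast e0
        have e1R : ((t i % m : ℤ) : ℝ) < m := by exact_mod_cast e1
        have e2 : (t i : ℝ) / m = ((t i / m : ℤ) : ℝ) + ((t i % m : ℤ) : ℝ) / m := by
          rw [← eR]; field_simp
        have e3 : 0 ≤ ((t i % m : ℤ) : ℝ) / m := by positivity
        have e4 : ((t i % m : ℤ) : ℝ) / m ≤ 1 := (div_le_one hm0).mpr e1R.le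
        rw [e2, abs_le]
        simp only [k]
        split_ifs
        · push_cast; constructor <;> linarith
        · push_cast; constructor <;> linarith
      have hφg : φ (g : K) = ∑ i, (t i : ℝ) * φ (b i : K) := by
        conv_lhs => rw [hgsum]
        simp [zsmul_eq_mul]
      have hφf : φ ((∑ i, k j i • b i : 𝓞 K) : K) = ∑ i, (k j i : ℝ) * φ (b i : K) := by
        simp [zsmul_eq_mul]
      have hdiff : |φ ((∑ i, k j i • b i : 𝓞 K) : K) - φ (g : K) / m| ≤ D := by
        rw [hφf, hφg, Finset.sum_div, ← Finset.sum_sub_distrib]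
        refine (Finset.abs_sum_le_sum_abs _ _).trans ((Finset.sum_le_sum fun i _ => ?_).trans (hDφ φ))
        rw [show (k j i : ℝ) * φ (b i : K) - (t i : ℝ) * φ (b i : K) / m
          = ((k j i : ℝ) - t i / m) * φ (b i : K) by ring, abs_mul]
        exact mul_le_of_le_one_left (abs_nonneg _) (hbound i)
      have hup : φ (g : K) / m ≤ 2 * (c * R) := by
        rw [div_le_iff₀ hm0]
        have h1 := hu φ φ₀
        have h2 : c * M ≤ c * (2 * R * m) := by gcongr
        linarith
      have hdown : D + 3 ≤ φ (g : K) / m := by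
        rw [le_div_iff₀ hm0]
        have h1 := hu φ₀ φ
        have h2 : c * ((D + 3) * m) ≤ c * φ (g : K) := by
          have : c * ((D + 3) * m) = m * R := by rw [hR]; ring
          linarith
        exact le_of_mul_le_mul_left h2 (by linarith)
      rw [abs_le] at hdiff
      constructor <;> linarith

/-- The diagonal lattice: four copies of each element of `T`, plus copies of `⟨1⟩`. -/
noncomputable def diagLat {K : Type} [Field K] [NumberField K] (T : Finset (𝓞 K))
    (E : Type) [Fintype E] : QLat K :=
  haveI : NoZeroSMulDivisors (𝓞 K) (((T × Fin 4) ⊕ E) → 𝓞 K) := inferInstance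
  { carrier := ((T × Fin 4) ⊕ E) → 𝓞 K
    Q := QuadraticMap.weightedSumSquares (𝓞 K)
      (Sum.elim (fun p => (p.1 : 𝓞 K)) (fun _ => (1 : 𝓞 K))) }

lemma diagLat_Q {K : Type} [Field K] [NumberField K] (T : Finset (𝓞 K))
    (E : Type) [Fintype E] (v : ((T × Fin 4) ⊕ E) → 𝓞 K) : (diagLat T E).Q v =
      ∑ i, (Sum.elim (fun p => (p.1 : 𝓞 K)) (fun _ => (1 : 𝓞 K)) i) * (v i * v i) :=
  QuadraticMap.weightedSumSquares_apply _ v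

lemma emb_two {K : Type} [Field K] [NumberField K] (φ : K →+* ℝ) :
    φ ((2 : 𝓞 K) : K) = 2 := by
  rw [show ((2 : 𝓞 K) : K) = 2 from map_ofNat (algebraMap (𝓞 K) K) 2, map_ofNat]

lemma diagLat_rep_iff {K : Type} [Field K] [NumberField K] (T : Finset (𝓞 K))
    (E : Type) [Fintype E] (a : 𝓞 K) : (diagLat T E).Rep a ↔
      ∃ (x : T → Fin 4 → 𝓞 K) (y : E → 𝓞 K),
        ∑ s : T, ∑ i, (s : 𝓞 K) * (x s i) ^ 2 + ∑ e, y e ^ 2 = a := by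
  constructor
  · rintro ⟨v, hv⟩
    change ((T × Fin 4) ⊕ E) → 𝓞 K at v
    rw [diagLat_Q T E v] at hv
    refine ⟨fun s i => v (Sum.inl (s, i)), fun e => v (Sum.inr e), ?_⟩
    rw [← hv]
    rw [Fintype.sum_sum_type, Fintype.sum_prod_type]
    simp [pow_two]
  · rintro ⟨x, y, h⟩
    refine ⟨(Sum.elim (fun p => x p.1 p.2) y : ((T × Fin 4) ⊕ E) → 𝓞 K), ?_⟩
    rw [← h]
    rw [diagLat_Q, Fintype.sum_sum_type, Fintype.sum_prod_type]
    simp [pow_two]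

lemma diagLat_posDef {K : Type} [Field K] [NumberField K] (T : Finset (𝓞 K))
    (E : Type) [Fintype E] (hT : ∀ s ∈ T, TPos s) : (diagLat T E).PosDef := by
  intro v hv φ
  change ((T × Fin 4) ⊕ E) → 𝓞 K at v
  have h1 : ∃ i, v i ≠ 0 := by
    by_contra! h
    exact hv (funext h)
  rw [diagLat_Q T E v]
  have hw : ∀ i : (T × Fin 4) ⊕ E,
      0 < φ ((Sum.elim (fun p => (p.1 : 𝓞 K)) (fun _ => (1 : 𝓞 K)) i : 𝓞 K) : K) := by
    rintro (⟨s, i⟩ | e)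
    · exact hT _ s.2 φ
    · simp
  simp only [map_sum, map_mul]
  obtain ⟨i, hi⟩ := h1
  refine Finset.sum_pos' (fun j _ => mul_nonneg (hw j).le (mul_self_nonneg _))
    ⟨i, Finset.mem_univ _, mul_pos (hw i) (mul_self_pos.mpr ?_)⟩
  simpa using hi

lemma diagLat_rep_smul {K : Type} [Field K] [NumberField K] (L : QLat K) (u : (𝓞 K)ˣ) (a : 𝓞 K)
    (h : L.Rep (u ^ 2 * a)) : L.Rep a := by
  obtain ⟨v, hv⟩ := h
  refine ⟨(↑u⁻¹ : 𝓞 K) • v, ?_⟩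
  rw [QuadraticMap.map_smul, hv, smul_eq_mul]
  have := u.inv_mul
  linear_combination (↑u⁻¹ * (u : 𝓞 K) + 1) * a * this

lemma diagLat_rep_sum {K : Type} [Field K] [NumberField K] (T : Finset (𝓞 K))
    (E : Type) [Fintype E] (m : ℕ) (f : Fin m → 𝓞 K) (hf : ∀ j, f j ∈ T) :
    (diagLat T E).Rep (∑ j, f j) := by
  classical
  rw [diagLat_rep_iff]
  choose a b c d h using fun s : T =>
    Nat.sum_four_squares (Finset.univ.filter fun j => f j = (s : 𝓞 K)).card
  refine ⟨fun s => ![(a s : 𝓞 K), (b s : 𝓞 K), (c s : 𝓞 K), (d s : 𝓞 K)], fun _ => 0, ?_⟩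
  rw [← Finset.sum_fiberwise_of_maps_to (s := Finset.univ) (t := T) (g := f) (fun j _ => hf j) f,
    ← Finset.sum_coe_sort T]
  simp only [ne_eq, OfNat.ofNat_ne_zero, not_false_eq_true, zero_pow, Finset.sum_const_zero,
    add_zero]
  refine Finset.sum_congr rfl fun s _ => ?_
  rw [Finset.sum_congr rfl (fun j hj => (Finset.mem_filter.mp hj).2), Finset.sum_const, ← h s,
    nsmul_eq_mul, Fin.sum_univ_four]
  simp
  ring

lemma not_unit_sq {K : Type} [Field K] [NumberField K] (hK : TotReal K) (σ : 𝓞 K) (ε : (𝓞 K)ˣ)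
    (h : ∀ φ : K →+* ℝ, 2 < φ (σ : K)) : σ ≠ (ε : 𝓞 K) ^ 2 ∧ σ ≠ 2 * (ε : 𝓞 K) ^ 2 := by
  have key : ¬ ∀ φ : K →+* ℝ, 1 < φ ((ε : 𝓞 K) : K) ^ 2 := by
    intro hε
    obtain ⟨w⟩ := (inferInstance : Nonempty (InfinitePlace K))
    have hlt : ∀ z : InfinitePlace K, z (((ε⁻¹ : (𝓞 K)ˣ) : 𝓞 K) : K) < 1 := by
      intro z
      obtain ⟨φ, hφ⟩ := exists_real_of_place hK z
      rw [hφ]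
      have h1 := hε φ
      have h2 : φ ((ε : 𝓞 K) : K) * φ (((ε⁻¹ : (𝓞 K)ˣ) : 𝓞 K) : K) = 1 := by
        rw [← map_mul, ← map_mul, ε.mul_inv]; simp
      rw [← sq_lt_one_iff_abs_lt_one]
      by_contra! h3
      have h4 : φ ((ε : 𝓞 K) : K) ^ 2 * φ (((ε⁻¹ : (𝓞 K)ˣ) : 𝓞 K) : K) ^ 2 = 1 := by
        rw [← mul_pow, h2, one_pow]
      nlinarith
    exact absurd (InfinitePlace.one_le_of_lt_one (w := w) (a := ((ε⁻¹ : (𝓞 K)ˣ) : 𝓞 K))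
      (Units.ne_zero _) (fun z _ => hlt z)) (not_le.mpr (hlt w))
  constructor
  · rintro rfl
    refine key fun φ => ?_
    have := h φ
    simp only [map_pow] at this
    linarith
  · rintro rfl
    refine key fun φ => ?_
    have := h φ
    simp only [map_mul, map_pow, map_ofNat] at this
    linarith

/-- If `t` is totally positive and totally at most `2` then it is `1` or `2`. -/
lemma eq_one_or_two {K : Type} [Field K] [NumberField K] (hK : TotReal K)
    (ha : ∀ α : 𝓞 K, TPos α → TLE α 2 → ∃ z : ℤ, α = (z : 𝓞 K))
    (t : 𝓞 K) (ht : TPos t) (h : ∀ φ : K →+* ℝ, φ (t : K) ≤ 2) : t = 1 ∨ t = 2 := by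
  by_cases h2 : t = 2
  · exact Or.inr h2
  left
  have hlt : ∀ φ : K →+* ℝ, φ (t : K) < 2 := by
    intro φ
    refine lt_of_le_of_ne (h φ) fun he => h2 ?_
    apply RingOfIntegers.coe_injective
    apply φ.injective
    rw [he]; exact (emb_two φ).symm
  obtain ⟨z, rfl⟩ := ha t ht (Or.inl fun φ => by simpa [emb_two] using hlt φ)
  obtain ⟨φ⟩ := exists_real hK
  have h3 := hlt φ
  have h4 := ht φ
  simp only [map_intCast] at h3 h4
  have h5 : z < 2 := by exact_mod_cast h3
  have h6 : 0 < z := by exact_mod_cast h4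
  have : z = 1 := by omega
  simp [this]

lemma term_le {K : Type} [Field K] [NumberField K] (T : Finset (𝓞 K)) (hT : ∀ s ∈ T, TPos s)
    (E : Type) [Fintype E] (x : T → Fin 4 → 𝓞 K) (y : E → 𝓞 K) (s : T) (i : Fin 4)
    (φ : K →+* ℝ) : φ (((s : 𝓞 K) * x s i ^ 2 : 𝓞 K) : K) ≤
      φ ((∑ s : T, ∑ i, (s : 𝓞 K) * (x s i) ^ 2 + ∑ e, y e ^ 2 : 𝓞 K) : K) := by
  have h0 : ∀ (s : T) i, 0 ≤ φ (((s : 𝓞 K) * x s i ^ 2 : 𝓞 K) : K) := fun s i => by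
    simp only [map_mul, map_pow]
    exact mul_nonneg (hT _ s.2 φ).le (sq_nonneg _)
  have h1 := Finset.single_le_sum (f := fun i => φ (((s : 𝓞 K) * x s i ^ 2 : 𝓞 K) : K))
    (fun i _ => h0 s i) (Finset.mem_univ i)
  have h2 := Finset.single_le_sum
    (f := fun s : T => ∑ i, φ (((s : 𝓞 K) * x s i ^ 2 : 𝓞 K) : K))
    (fun s _ => Finset.sum_nonneg fun i _ => h0 s i) (Finset.mem_univ s)
  have h3 : 0 ≤ ∑ e, φ ((y e : K)) ^ 2 := Finset.sum_nonneg fun _ _ => sq_nonneg _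
  have e : φ ((∑ s : T, ∑ i, (s : 𝓞 K) * (x s i) ^ 2 + ∑ e, y e ^ 2 : 𝓞 K) : K) =
      ∑ s : T, ∑ i, φ (((s : 𝓞 K) * x s i ^ 2 : 𝓞 K) : K) + ∑ e, φ ((y e : K)) ^ 2 := by
    simp only [map_add, map_sum, map_pow]
  rw [e]
  linarith

lemma exists_T {K : Type} [Field K] [NumberField K] (hK : TotReal K) (bad : 𝓞 K → Prop)
    (hbad : ∀ σ, bad σ → ∃ ε : (𝓞 K)ˣ, σ = (ε : 𝓞 K) ^ 2 ∨ σ = 2 * (ε : 𝓞 K) ^ 2)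
    (hinv : ∀ σ (u : (𝓞 K)ˣ), bad (u ^ 2 * σ) → bad σ) :
    ∃ T : Finset (𝓞 K), (∀ s ∈ T, TPos s ∧ ¬ bad s) ∧
      ∀ (E : Type) [Fintype E] (γ : 𝓞 K), TPos γ → ¬ bad γ → (diagLat T E).Rep γ := by
  classical
  obtain ⟨B, hB⟩ := split hK
  obtain ⟨T, hT⟩ : ∃ T : Finset (𝓞 K), ∀ s, s ∈ T ↔
      (TPos s ∧ ∀ φ : K →+* ℝ, φ (s : K) ≤ B) ∧ ¬ bad s :=
    ⟨(finite_bdd hK B).toFinset.filter fun s => ¬ bad s, fun s => by simp⟩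
  refine ⟨T, fun s hs => ⟨((hT s).mp hs).1.1, ((hT s).mp hs).2⟩, fun E _ γ hγ hb => ?_⟩
  obtain ⟨u, hu⟩ := hB γ hγ
  apply diagLat_rep_smul _ u
  rcases hu with hu | ⟨m, f, hf, hfb⟩
  · have hmem : (u ^ 2 * γ : 𝓞 K) ∈ T := by
      refine (hT _).mpr ⟨⟨fun φ => ?_, hu⟩, fun h => hb (hinv _ _ h)⟩
      simp only [map_mul, map_pow]
      have : φ ((u : 𝓞 K) : K) ≠ 0 := by simp
      have := hγ φ
      positivity
    have := diagLat_rep_sum T E 1 (fun _ => u ^ 2 * γ) (fun _ => hmem)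
    simpa using this
  · rw [hf]
    refine diagLat_rep_sum T E m f fun j => (hT _).mpr ⟨⟨fun φ => ?_, fun φ => (hfb j φ).2⟩, ?_⟩
    · linarith [(hfb j φ).1]
    · intro h
      obtain ⟨ε, h⟩ := hbad _ h
      have := not_unit_sq hK (f j) ε (fun φ => (hfb j φ).1)
      tauto

theorem stmt9 {K : Type} [Field K] [NumberField K] (hK : TotReal K)
    (ha : ∀ α : 𝓞 K, TPos α → TLE α 2 → ∃ z : ℤ, α = (z : 𝓞 K))
    (hb : ∀ α ω : 𝓞 K, (2 : 𝓞 K) = α * ω ^ 2 →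
      ∃ ε : (𝓞 K)ˣ, ∃ z : ℤ, (ε : 𝓞 K) * ω = (z : 𝓞 K)) :
    (∀ L : QLat K, (∀ v : L.carrier, v = 0) →
      (¬ L.Rep 1 ∧ ∀ γ : 𝓞 K, TPos γ → Nm γ < Nm (1 : 𝓞 K) → L.Rep γ)) ∧
    (∀ C : Set (𝓞 K), IsCritSet C → ∃ c ∈ C, ∃ ε : (𝓞 K)ˣ, c = (ε : 𝓞 K) ^ 2) ∧
    (Crit (2 : 𝓞 K) ↔ ∀ ω : 𝓞 K, ω ^ 2 ∣ 2 → IsUnit ω) := by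
  classical
  have hone : TPos (1 : 𝓞 K) := fun φ => by simp
  have htwo : TPos (2 : 𝓞 K) := fun φ => by rw [emb_two]; norm_num
  have hsqinv : ∀ (x : 𝓞 K) (u : (𝓞 K)ˣ), x = ((u⁻¹ : (𝓞 K)ˣ) : 𝓞 K) ^ 2 * (u ^ 2 * x) := by
    intro x u
    have := u.inv_mul
    linear_combination (-(↑u⁻¹ * (u : 𝓞 K) + 1) * x) * this
  have hterm : ∀ s x : 𝓞 K, TPos s → x ≠ 0 → TPos (s * x ^ 2) := by
    intro s x hs hx φ
    have : φ (x : K) ≠ 0 := by simpa using hx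
    have := hs φ
    simp only [map_mul, map_pow]
    positivity
  have hunit : ∀ s x : 𝓞 K, s * x ^ 2 = 1 → ∃ ε : (𝓞 K)ˣ, s = (ε : 𝓞 K) ^ 2 := by
    intro s x h
    have hx : IsUnit x := IsUnit.of_mul_eq_one (s * x) (by rw [← h]; ring)
    obtain ⟨u, rfl⟩ := hx
    refine ⟨u⁻¹, ?_⟩
    have := hsqinv s u
    rw [mul_comm ((u : 𝓞 K) ^ 2), h, mul_one] at this
    exact this
  refine ⟨?_, ?_, ?_⟩
  · intro L hL
    constructor
    · rintro ⟨v, hv⟩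
      rw [hL v, QuadraticMap.map_zero] at hv
      exact zero_ne_one hv
    · intro γ hγ hlt
      have := nm_pos hK γ hγ
      have h1 : Nm (1 : 𝓞 K) = 1 := by simp [Nm]
      omega
  · rintro C ⟨hC, hcrit⟩
    by_contra! hno
    obtain ⟨T, hT, hrep⟩ := exists_T hK (fun σ => ∃ ε : (𝓞 K)ˣ, σ = (ε : 𝓞 K) ^ 2)
      (fun σ ⟨ε, h⟩ => ⟨ε, Or.inl h⟩) (by
        rintro σ u ⟨ε, h⟩
        refine ⟨u⁻¹ * ε, ?_⟩
        rw [hsqinv σ u, h]; push_cast; ring)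
    have h1 := (hcrit _ (diagLat_posDef T Empty fun s hs => (hT s hs).1)).mp
      (fun c hc => hrep Empty c (hC c hc) (by simpa using hno c hc)) 1 hone
    rw [diagLat_rep_iff] at h1
    obtain ⟨x, y, hxy⟩ := h1
    have hex : ∃ s i, x s i ≠ 0 := by
      by_contra! h
      simp [h] at hxy
    obtain ⟨s, i, hsi⟩ := hex
    have hle := term_le T (fun s hs => (hT s hs).1) Empty x y s i
    rw [hxy] at hle
    have hle1 : ∀ φ : K →+* ℝ, φ (((s : 𝓞 K) * x s i ^ 2 : 𝓞 K) : K) ≤ 1 := fun φ => by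
      simpa using hle φ
    rcases eq_one_or_two hK ha _ (hterm s (x s i) (hT _ s.2).1 hsi)
      (fun φ => (hle1 φ).trans one_le_two) with h | h
    · exact (hT _ s.2).2 (hunit _ _ h)
    · obtain ⟨φ⟩ := exists_real hK
      have := hle1 φ
      rw [h, emb_two] at this
      norm_num at this
  · constructor
    · rintro ⟨-, L, hpos, hrep, hnot⟩ ω ⟨α, hα⟩
      by_contra hω
      have hω0 : ω ≠ 0 := by
        rintro rfl
        norm_num at hα
      apply hnot
      have hαpos : TPos α := by
        intro φ
        have h1 : φ (ω : K) ≠ 0 := by simpa using hω0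
        have h2 : (2 : ℝ) = φ (ω : K) ^ 2 * φ (α : K) := by
          have := congrArg (fun z : 𝓞 K => φ (z : K)) hα
          simpa [emb_two] using this
        have h3 : 0 < φ (ω : K) ^ 2 := by positivity
        by_contra! h4
        nlinarith
      obtain ⟨v, hv⟩ := hrep α hαpos (by
        rintro ⟨ε, hε⟩
        apply hω
        have h2 : (2 : 𝓞 K) * (ω * (ω * ε ^ 2)) = 2 * 1 := by
          rw [hε] at hα
          linear_combination -hα
        exact IsUnit.of_mul_eq_one _ (mul_left_cancel₀ two_ne_zero h2))
      refine ⟨ω • v, ?_⟩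
      rw [QuadraticMap.map_smul, hv, hα, smul_eq_mul]; ring
    · intro hsf
      obtain ⟨T, hT, hrep⟩ := exists_T hK
        (fun σ => ∃ ε : (𝓞 K)ˣ, σ = (ε : 𝓞 K) ^ 2 ∨ σ = 2 * (ε : 𝓞 K) ^ 2)
        (fun σ h => h) (by
          rintro σ u ⟨ε, h⟩
          refine ⟨u⁻¹ * ε, ?_⟩
          rcases h with h | h
          · left; rw [hsqinv σ u, h]; push_cast; ring
          · right; rw [hsqinv σ u, h]; push_cast; ring)
      refine ⟨htwo, diagLat T Unit, diagLat_posDef T Unit fun s hs => (hT s hs).1, ?_, ?_⟩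
      · intro γ hγ hγ2
        by_cases h1 : ∃ ε : (𝓞 K)ˣ, γ = (ε : 𝓞 K) ^ 2
        · obtain ⟨ε, rfl⟩ := h1
          rw [diagLat_rep_iff]
          exact ⟨fun _ _ => 0, fun _ => ε, by simp⟩
        · refine hrep Unit γ hγ ?_
          rintro ⟨ε, h | h⟩
          · exact h1 ⟨ε, h⟩
          · exact hγ2 ⟨ε, h⟩
      · rw [diagLat_rep_iff]
        rintro ⟨x, y, hxy⟩
        by_cases hex : ∃ s i, x s i ≠ 0
        · obtain ⟨s, i, hsi⟩ := hex
          have hle := term_le T (fun s hs => (hT s hs).1) Unit x y s i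
          rw [hxy] at hle
          rcases eq_one_or_two hK ha _ (hterm s (x s i) (hT _ s.2).1 hsi)
            (fun φ => (hle φ).trans (emb_two φ).le) with h | h
          · obtain ⟨ε, hε⟩ := hunit _ _ h
            exact (hT _ s.2).2 ⟨ε, Or.inl hε⟩
          · obtain ⟨u, hu⟩ := hsf (x s i) ⟨s, by rw [← h]; ring⟩
            refine (hT _ s.2).2 ⟨u⁻¹, Or.inr ?_⟩
            have := hsqinv s u
            rw [hu, mul_comm ((x s i) ^ 2), h] at this
            rw [this]; ring
        · push Not at hex
          simp only [hex] at hxy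
          have hy : y () ^ 2 = 2 := by simpa using hxy
          have hu := hsf (y ()) ⟨1, by rw [hy]; ring⟩
          have h2 : IsUnit (2 : 𝓞 K) := by rw [← hy]; exact hu.pow 2
          obtain ⟨u, hu⟩ := h2
          have e := u.mul_inv
          rw [hu] at e
          have hlt : ∀ z : InfinitePlace K, z (((u⁻¹ : (𝓞 K)ˣ) : 𝓞 K) : K) < 1 := by
            intro z
            obtain ⟨φ, hφ⟩ := exists_real_of_place hK z
            have e2 : 2 * φ (((u⁻¹ : (𝓞 K)ˣ) : 𝓞 K) : K) = 1 := by
              have := congrArg (fun z : 𝓞 K => φ (z : K)) e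
              simpa only [map_mul, map_ofNat, map_one] using this
            rw [hφ, abs_lt]
            constructor <;> linarith
          obtain ⟨w⟩ := (inferInstance : Nonempty (InfinitePlace K))
          exact absurd (InfinitePlace.one_le_of_lt_one (w := w) (a := ((u⁻¹ : (𝓞 K)ˣ) : 𝓞 K))
            (Units.ne_zero _) (fun z _ => hlt z)) (not_le.mpr (hlt w))
end

section
/- Let K = ℚ(√5). The quadratic form ⟨1,1,3,3⟩ over O_K, i.e., Q(x,y,z,w) = x² + y² + 3z² + 3w², does not represent (7+√5)/2, even though it represents every positive rational integer. -/
open NumberField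

/-- Balanced residues. -/
lemma s16_bal (a m : ℤ) (hm : 0 < m) : ∃ k : ℤ, -m ≤ 2 * (a + m * k) ∧ 2 * (a + m * k) ≤ m := by
  refine ⟨-((2 * a + m) / (2 * m)), ?_⟩
  have h1 := Int.emod_add_mul_ediv (2 * a + m) (2 * m)
  have h2 := Int.emod_nonneg (2 * a + m) (show 2 * m ≠ 0 by omega)
  have h3 := Int.emod_lt_of_pos (2 * a + m) (show 0 < 2 * m by omega)
  constructor <;> nlinarith

lemma s16_red (a b m : ℤ) (hm : 0 < m) : ∃ k l : ℤ,
    16 * ((a + m * k) ^ 2 + (a + m * k) * (b + m * l) + (b + m * l) ^ 2) ≤ 7 * m ^ 2 := by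
  obtain ⟨l, hl1, hl2⟩ := s16_bal b m hm
  obtain ⟨k, hk1, hk2⟩ := s16_bal (2 * a + (b + m * l)) (2 * m) (by omega)
  refine ⟨k, l, ?_⟩
  generalize b + m * l = B at *
  have e : 2 * a + B + 2 * m * k = 2 * (a + m * k) + B := by ring
  rw [e] at hk1 hk2
  generalize a + m * k = A at *
  have h1 : (2 * B) ^ 2 ≤ m ^ 2 := by nlinarith
  have h2 : (2 * A + B) ^ 2 ≤ m ^ 2 := by nlinarith
  nlinarith

def S16R (n : ℤ) : Prop := ∃ a b c d : ℤ, a ^ 2 + a * b + b ^ 2 + (c ^ 2 + c * d + d ^ 2) = n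

lemma s16_nonneg (a b : ℤ) : 0 ≤ a ^ 2 + a * b + b ^ 2 := by
  nlinarith [sq_nonneg (2 * a + b), sq_nonneg b]

lemma s16_zero (a b : ℤ) (h : a ^ 2 + a * b + b ^ 2 = 0) : a = 0 ∧ b = 0 := by
  have h1 : b ^ 2 = 0 := by nlinarith [sq_nonneg (2 * a + b), sq_nonneg b]
  have h2 : a ^ 2 = 0 := by nlinarith [sq_nonneg (2 * b + a), sq_nonneg a]
  exact ⟨by simpa using h2, by simpa using h1⟩

lemma s16_mul {m n : ℤ} (hm : S16R m) (hn : S16R n) : S16R (m * n) := by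
  obtain ⟨a, b, c, d, rfl⟩ := hm
  obtain ⟨e, f, g, h, rfl⟩ := hn
  exact ⟨a * e + a * f + b * f + (c * g + c * h + d * h), b * e - a * f + (d * g - c * h),
    a * g - b * h - (c * e - d * f), a * h + b * g + b * h - (c * f + d * e + d * f), by ring⟩

lemma s16_desc (p : ℕ) (hp : p.Prime) (m : ℕ) : 0 < m → m < p → S16R (m * p) → S16R p := by
  induction m using Nat.strong_induction_on with
  | _ m ih =>
  intro h0 hlt hR
  by_cases h1 : m = 1
  · subst h1; simpa using hR
  obtain ⟨a, b, c, d, h⟩ := hR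
  have hm : (0 : ℤ) < m := by exact_mod_cast h0
  obtain ⟨k, l, hkl⟩ := s16_red a b m hm
  obtain ⟨s, t, hst⟩ := s16_red c d m hm
  have n1 := s16_nonneg (a + m * k) (b + m * l)
  have n2 := s16_nonneg (c + m * s) (d + m * t)
  obtain ⟨q, hq⟩ : ∃ q : ℤ, ((a + m * k) ^ 2 + (a + m * k) * (b + m * l) + (b + m * l) ^ 2) +
      ((c + m * s) ^ 2 + (c + m * s) * (d + m * t) + (d + m * t) ^ 2) = m * q :=
    ⟨p + (2 * a * k + m * k ^ 2 + a * l + k * b + m * k * l + 2 * b * l + m * l ^ 2) +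
      (2 * c * s + m * s ^ 2 + c * t + s * d + m * s * t + 2 * d * t + m * t ^ 2), by
      linear_combination h⟩
  have q0 : 0 ≤ q := by
    by_contra hh
    nlinarith
  have qm : q < m := by
    by_contra hh
    nlinarith
  rcases q0.eq_or_lt with hq0 | hq0
  · exfalso
    subst hq0
    obtain ⟨e1, e2⟩ := s16_zero (a + m * k) (b + m * l) (by linarith)
    obtain ⟨e3, e4⟩ := s16_zero _ _ (show (c + m * s) ^ 2 + (c + m * s) * (d + m * t) + (d + m * t) ^ 2 = 0 by linarith)
    have ha : a = - (m * k) := by linarith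
    have hb : b = - (m * l) := by linarith
    have hc : c = - (m * s) := by linarith
    have hd : d = - (m * t) := by linarith
    subst ha hb hc hd
    have : (m : ℤ) ∣ p := ⟨k ^ 2 + k * l + l ^ 2 + (s ^ 2 + s * t + t ^ 2), by
      apply mul_left_cancel₀ hm.ne'
      linear_combination -h⟩
    have := (Nat.dvd_prime hp).1 (by exact_mod_cast this)
    omega
  · lift q to ℕ using q0
    refine ih q (by exact_mod_cast qm) (by exact_mod_cast hq0) (by omega) ?_
    refine ⟨p + (a * k + a * l + b * l) + (c * s + c * t + d * t),
      (b * k - a * l) + (d * s - c * t),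
      (a * s - b * t) - (c * k - d * l),
      (a * t + b * s + b * t) - (c * l + d * k + d * l), ?_⟩
    apply mul_left_cancel₀ (pow_ne_zero 2 hm.ne')
    have key : (m : ℤ) ^ 2 * (q * p) = (m * p) * (m * q) := by ring
    rw [key, ← hq, ← h]
    have hp' : (m : ℤ) * p = a ^ 2 + a * b + b ^ 2 + (c ^ 2 + c * d + d ^ 2) := h.symm
    have e1 : (m : ℤ) * (p + (a * k + a * l + b * l) + (c * s + c * t + d * t)) =
      a ^ 2 + a * b + b ^ 2 + (c ^ 2 + c * d + d ^ 2) + m * ((a * k + a * l + b * l) + (c * s + c * t + d * t)) := by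
      rw [← hp']; ring
    generalize (p + (a * k + a * l + b * l) + (c * s + c * t + d * t) : ℤ) = X at e1
    generalize hY : (b * k - a * l) + (d * s - c * t) = Y
    trans (m * X) ^ 2 + (m * X) * (m * Y) + (m * Y) ^ 2 + m ^ 2 * (((a * s - b * t) - (c * k - d * l)) ^ 2 + ((a * s - b * t) - (c * k - d * l)) * ((a * t + b * s + b * t) - (c * l + d * k + d * l)) + ((a * t + b * s + b * t) - (c * l + d * k + d * l)) ^ 2)
    · ring
    rw [e1, ← hY]
    ring

lemma s16_prime (p : ℕ) (hp : p.Prime) : S16R p := by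
  rcases hp.eq_two_or_odd' with rfl | hodd
  · exact ⟨1, 0, 1, 0, by norm_num⟩
  have := Fact.mk hp
  have hp3 : 3 ≤ p := by
    have := hp.two_le
    rcases hodd with ⟨k, hk⟩
    omega
  have h2 : (2 : ZMod p) ≠ 0 := by
    intro h
    have : ((2 : ℕ) : ZMod p) = 0 := by exact_mod_cast h
    rw [ZMod.natCast_eq_zero_iff] at this
    have := Nat.le_of_dvd (by norm_num) this
    omega
  obtain ⟨x, y, hxy⟩ := ZMod.sq_add_sq p (-3)
  obtain ⟨a, ha⟩ : ∃ a : ZMod p, 2 * a + 1 = x := ⟨(x - 1) / 2, by field_simp; ring⟩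
  obtain ⟨c, hc⟩ : ∃ c : ZMod p, 2 * c = y := ⟨y / 2, by field_simp⟩
  have hac : a ^ 2 + a + 1 + c ^ 2 = 0 := by
    have : (2 * 2) * (a ^ 2 + a + 1 + c ^ 2) = 0 := by
      subst ha hc; linear_combination hxy
    exact (mul_eq_zero.1 this).resolve_left (mul_ne_zero h2 h2)
  obtain ⟨A, rfl⟩ := ZMod.intCast_surjective a
  obtain ⟨C, rfl⟩ := ZMod.intCast_surjective c
  have hpz : (3 : ℤ) ≤ p := by exact_mod_cast hp3
  obtain ⟨k, hk1, hk2⟩ := s16_bal A p (by omega)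
  obtain ⟨l, hl1, hl2⟩ := s16_bal C p (by omega)
  have hd : (p : ℤ) ∣ (A + p * k) ^ 2 + (A + p * k) + 1 + (C + p * l) ^ 2 := by
    rw [← ZMod.intCast_zmod_eq_zero_iff_dvd]
    push_cast
    simpa using hac
  generalize A + p * k = A' at *
  generalize C + p * l = C' at *
  obtain ⟨m, hm⟩ := hd
  have hpos : 0 < A' ^ 2 + A' + 1 + C' ^ 2 := by nlinarith [sq_nonneg (2 * A' + 1), sq_nonneg C']
  have hA : (2 * A') ^ 2 ≤ (p : ℤ) ^ 2 := by nlinarith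
  have hC : (2 * C') ^ 2 ≤ (p : ℤ) ^ 2 := by nlinarith
  have m0 : 0 < m := by
    by_contra hh
    nlinarith
  have mp : m < p := by
    by_contra hh
    nlinarith
  lift m to ℕ using m0.le
  exact s16_desc p hp m (by exact_mod_cast m0) (by exact_mod_cast mp)
    ⟨A', 1, C', 0, by linear_combination hm⟩

lemma s16_all (n : ℕ) : S16R n := by
  induction n using Nat.recOnMul with
  | zero => exact ⟨0, 0, 0, 0, by norm_num⟩
  | one => exact ⟨1, 0, 0, 0, by norm_num⟩
  | prime p hp => exact s16_prime p hp
  | mul a b ha hb => push_cast; exact s16_mul ha hb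

lemma s16_conv (a b : ℤ) : ∃ x y : ℤ, a ^ 2 + a * b + b ^ 2 = x ^ 2 + 3 * y ^ 2 := by
  rcases Int.even_or_odd' a with ⟨k, rfl | hk⟩
  · exact ⟨b + k, k, by ring⟩
  rcases Int.even_or_odd' b with ⟨l, rfl | hl⟩
  · exact ⟨a + l, l, by ring⟩
  · exact ⟨k - l, k + l + 1, by subst hk hl; ring⟩

lemma s16_int (K : Type) [Field K] [NumberField K] (hdeg : Module.finrank ℚ K = 2)
    (r α : 𝓞 K) (hr : r ^ 2 = 5) (hα : 2 * α = 7 + r) :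
    (∀ p q : ℚ, (p : K) + q * (algebraMap (𝓞 K) K r) = 0 → p = 0 ∧ q = 0) ∧
    ∀ x : 𝓞 K, ∃ c d : ℤ, x = c + d * (α - 3) := by
  have hrK : (algebraMap (𝓞 K) K r) ^ 2 = 5 := by
    have := congrArg (algebraMap (𝓞 K) K) hr
    simpa only [map_pow, map_ofNat] using this
  have hαK : 2 * (algebraMap (𝓞 K) K α) = 7 + algebraMap (𝓞 K) K r := by
    have := congrArg (algebraMap (𝓞 K) K) hα
    simpa only [map_add, map_mul, map_ofNat] using this
  have hind : ∀ p q : ℚ, (p : K) + q * (algebraMap (𝓞 K) K r) = 0 → p = 0 ∧ q = 0 := by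
    intro p q h
    have h5 : p ^ 2 = 5 * q ^ 2 := by
      have : (p : K) ^ 2 = 5 * q ^ 2 := by
        have : (p : K) = - (q * r) := by linear_combination h
        rw [this]; linear_combination q ^ 2 * hrK
      exact_mod_cast this
    have hq : q = 0 := by
      by_contra hq
      have h5' : (p / q) ^ 2 = 5 := by field_simp; linarith
      have : Irrational (Real.sqrt 5) := Nat.Prime.irrational_sqrt (p := 5) (by norm_num)
      apply this
      refine ⟨|p / q|, ?_⟩
      rw [eq_comm, Real.sqrt_eq_iff_mul_self_eq (by norm_num) (by positivity)]
      rw [← sq]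
      push_cast
      rw [sq_abs]
      exact_mod_cast h5'.symm
    subst hq
    simpa using h5
  refine ⟨hind, ?_⟩
  have hli : LinearIndependent ℚ ![(1 : K), (algebraMap (𝓞 K) K r)] := by
    rw [LinearIndependent.pair_iff]
    intro s t h
    apply hind
    simpa [Algebra.smul_def] using h
  let B := basisOfLinearIndependentOfCardEqFinrank hli (by simp [hdeg])
  have B0 : B 0 = 1 := by simp [B]
  have B1 : B 1 = algebraMap (𝓞 K) K r := by simp [B]
  have hrep : ∀ y : K, ∃ p q : ℚ, y = p + q * algebraMap (𝓞 K) K r := by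
    intro y
    refine ⟨B.repr y 0, B.repr y 1, ?_⟩
    have := B.sum_repr y
    rw [Fin.sum_univ_two, B0, B1] at this
    refine this.symm.trans ?_
    simp [Algebra.smul_def]
  have tr1 : Algebra.trace ℚ K (algebraMap (𝓞 K) K r) = 0 := by
    rw [Algebra.trace_eq_matrix_trace B, Matrix.trace_fin_two, Algebra.leftMulMatrix_eq_repr_mul, Algebra.leftMulMatrix_eq_repr_mul, B0, B1, mul_one, ← sq, hrK]
    have e1 : B.repr (algebraMap (𝓞 K) K r) = Finsupp.single 1 1 := by rw [← B1, B.repr_self]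
    have e2 : B.repr (5 : K) = (5 : ℚ) • Finsupp.single 0 1 := by
      rw [← B.repr_self, B0, ← map_smul]
      simp [Algebra.smul_def]
    rw [e1, e2]
    simp
  have trf : ∀ p q : ℚ, Algebra.trace ℚ K ((p : K) + q * algebraMap (𝓞 K) K r) = 2 * p := by
    intro p q
    have e1 : (p : K) = algebraMap ℚ K p := by simp
    have e2 : (q : K) * algebraMap (𝓞 K) K r = q • (algebraMap (𝓞 K) K r) := by simp [Algebra.smul_def]
    rw [map_add, e2, map_smul, tr1, e1, Algebra.trace_algebraMap, hdeg]
    simp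
  have trint : ∀ y : 𝓞 K, ∃ n : ℤ, Algebra.trace ℚ K (algebraMap (𝓞 K) K y) = n := by
    intro y
    have := Algebra.isIntegral_trace (L := ℚ) (RingOfIntegers.isIntegral_coe y)
    obtain ⟨n, hn⟩ := IsIntegrallyClosed.isIntegral_iff.1 this
    exact ⟨n, by simpa using hn.symm⟩
  intro x
  obtain ⟨p, q, hx⟩ := hrep (algebraMap (𝓞 K) K x)
  obtain ⟨a, ha⟩ := trint x
  obtain ⟨e, he⟩ := trint (x * r)
  obtain ⟨f, hf⟩ := trint (x * x)
  rw [hx, trf] at ha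
  have he' : algebraMap (𝓞 K) K (x * r) = ((5 * q : ℚ) : K) + (p : ℚ) * algebraMap (𝓞 K) K r := by
    rw [map_mul, hx]; push_cast; linear_combination q * hrK
  have hf' : algebraMap (𝓞 K) K (x * x) = ((p ^ 2 + 5 * q ^ 2 : ℚ) : K) + ((2 * p * q : ℚ) : K) * algebraMap (𝓞 K) K r := by
    rw [map_mul, hx]; push_cast; linear_combination q ^ 2 * hrK
  rw [he', trf] at he
  rw [hf', trf] at hf
  have h1 : 5 * a ^ 2 + e ^ 2 = 10 * f := by
    have : (5 * a ^ 2 + e ^ 2 : ℚ) = 10 * f := by rw [← ha, ← he, ← hf]; ring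
    exact_mod_cast this
  have h5 : (5 : ℤ) ∣ e := by
    apply Int.Prime.dvd_pow' (p := 5) (n := e) (k := 2) (by norm_num)
    push_cast
    omega
  obtain ⟨b, rfl⟩ := h5
  have hb : 2 * q = b := by push_cast at he; linarith
  have h2 : a ^ 2 + 5 * b ^ 2 = 2 * f := by nlinarith
  have hpar : Even (a - b) := by
    have : Even (a ^ 2 + 5 * b ^ 2) := ⟨f, by omega⟩
    have h' : ¬ Even (5 : ℤ) := by decide
    simp [parity_simps, h'] at this ⊢
    tauto
  obtain ⟨c, hc⟩ := hpar
  refine ⟨c, b, ?_⟩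
  apply RingOfIntegers.coe_injective
  have hp : p = c + b / 2 := by
    have : (a : ℚ) = c + c + b := by exact_mod_cast (by omega : a = c + c + b)
    linarith
  have hq : q = b / 2 := by linarith
  rw [hx, hp, hq]
  push_cast
  simp only [map_add, map_mul, map_sub, map_intCast, map_ofNat]
  linear_combination (-(b : K) / 2) * hαK

lemma s16_sq_le (a : ℤ) (h : a ^ 2 ≤ 3) : a = -1 ∨ a = 0 ∨ a = 1 := by
  have : -2 < a := by nlinarith
  have : a < 2 := by nlinarith
  omega

lemma s16_fin (a b c d e f g h : ℤ)
    (h1 : a ^ 2 + b ^ 2 + (c ^ 2 + d ^ 2) + 3 * (e ^ 2 + f ^ 2) + 3 * (g ^ 2 + h ^ 2) = 3)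
    (h2 : 2 * a * b + b ^ 2 + (2 * c * d + d ^ 2) + 3 * (2 * e * f + f ^ 2)
      + 3 * (2 * g * h + h ^ 2) = 1) : False := by
  have pa := sq_nonneg a
  have pb := sq_nonneg b
  have pc := sq_nonneg c
  have pd := sq_nonneg d
  have pe := sq_nonneg e
  have pf := sq_nonneg f
  have pg := sq_nonneg g
  have ph := sq_nonneg h
  by_cases hz : e ^ 2 + f ^ 2 + g ^ 2 + h ^ 2 = 0
  · have hf : f = 0 := by have : f ^ 2 = 0 := by linarith
                          simpa using this
    have hh : h = 0 := by have : h ^ 2 = 0 := by linarith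
                          simpa using this
    subst hf hh
    have qa := s16_sq_le a (by linarith)
    have qb := s16_sq_le b (by linarith)
    have qc := s16_sq_le c (by linarith)
    have qd := s16_sq_le d (by linarith)
    rcases qa with rfl | rfl | rfl <;> rcases qb with rfl | rfl | rfl <;>
      rcases qc with rfl | rfl | rfl <;> rcases qd with rfl | rfl | rfl <;> omega
  · have hb : b = 0 := by have : b ^ 2 = 0 := by omega
                          simpa using this
    have hd : d = 0 := by have : d ^ 2 = 0 := by omega
                          simpa using this
    subst hb hd
    have : 3 * ((2 * e * f + f ^ 2) + (2 * g * h + h ^ 2)) = 1 := by linarith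
    omega

/-- in $K = ℚ(\sqrt5)$, the form $x²+y²+3z²+3w²$ represents every
positive rational integer (over $ℤ$) but does not represent $(7+\sqrt5)/2$ over
$\mathcal O_K$. -/
theorem stmt16 {K : Type} [Field K] [NumberField K]
    (hdeg : Module.finrank ℚ K = 2)
    (r α : 𝓞 K) (hr : r ^ 2 = 5) (hα : 2 * α = 7 + r) :
    (∀ n : ℕ, 0 < n → ∃ x y z w : ℤ, x ^ 2 + y ^ 2 + 3 * z ^ 2 + 3 * w ^ 2 = (n : ℤ)) ∧
    ¬ ∃ x y z w : 𝓞 K, x ^ 2 + y ^ 2 + 3 * z ^ 2 + 3 * w ^ 2 = α := by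
  constructor
  · intro n _
    obtain ⟨a, b, c, d, h⟩ := s16_all n
    obtain ⟨x, z, h1⟩ := s16_conv a b
    obtain ⟨y, w, h2⟩ := s16_conv c d
    exact ⟨x, y, z, w, by linarith⟩
  · rintro ⟨x, y, z, w, h⟩
    obtain ⟨hind, hrep⟩ := s16_int K hdeg r α hr hα
    obtain ⟨a, b, rfl⟩ := hrep x
    obtain ⟨c, d, rfl⟩ := hrep y
    obtain ⟨e, f, rfl⟩ := hrep z
    obtain ⟨g, k, rfl⟩ := hrep w
    have hrK : (algebraMap (𝓞 K) K r) ^ 2 = 5 := by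
      have := congrArg (algebraMap (𝓞 K) K) hr
      simpa only [map_pow, map_ofNat] using this
    have hαK : (algebraMap (𝓞 K) K α) = (7 + algebraMap (𝓞 K) K r) / 2 := by
      have := congrArg (algebraMap (𝓞 K) K) hα
      simp only [map_add, map_mul, map_ofNat] at this
      linear_combination this / 2
    have hK := congrArg (algebraMap (𝓞 K) K) h
    simp only [map_add, map_mul, map_sub, map_pow, map_intCast, map_ofNat] at hK
    rw [hαK] at hK
    let P : ℤ := a ^ 2 + b ^ 2 + (c ^ 2 + d ^ 2) + 3 * (e ^ 2 + f ^ 2) + 3 * (g ^ 2 + k ^ 2)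
    let S : ℤ := 2 * a * b + b ^ 2 + (2 * c * d + d ^ 2) + 3 * (2 * e * f + f ^ 2)
      + 3 * (2 * g * k + k ^ 2)
    have := hind (P + S / 2 - 7 / 2) (S / 2 - 1 / 2) (by
      simp only [P, S]
      push_cast
      linear_combination hK - (b ^ 2 + d ^ 2 + 3 * f ^ 2 + 3 * k ^ 2) / 4 * hrK)
    obtain ⟨e1, e2⟩ := this
    have hS : S = 1 := by
      have : (S : ℚ) = 1 := by linarith
      exact_mod_cast this
    have hP : P = 3 := by
      have : (P : ℚ) = 3 := by linarith
      exact_mod_cast this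
    exact s16_fin a b c d e f g k hP hS
end
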